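/- arXiv:1101.4807 — 9 statements merged into one kernel-verified Lean document; each statement's English description precedes it below -/
import Mathlib

section
/- Let S be a Γ-semiring with a left unity and a right unity, and let L be its left operator semiring. If σ is a fuzzy ideal of S, then σ⁺' is a fuzzy ideal of L; moreover, if σ is non-constant then σ⁺' is non-constant. -/
/-! Every `f ∈ L` satisfies `σ(s) ≤ σ(f(s))`, by induction on the additive closure; this gives
the bound `σ⁺'(g) ≤ σ⁺'(f ∘ g)`, while `σ⁺'(f) ≤ σ⁺'(f ∘ g)` holds because `f ∘ g` has smaller
range than `f`. If `σ⁺'` is constant, its value is `σ⁺'(0) = 1`, so `σ` is `1` on every product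
`xαa`; writing `a = ∑ eᵢδᵢa` with the left unity then forces `σ(a) = 1` for all `a`. -/

instance : Fact ((0:ℝ) ≤ 1) := ⟨zero_le_one⟩

/-- A `Γ`-semiring structure on additive commutative monoids `S` and `Γ`. -/
structure GammaSemiring (S Γ : Type*) [AddCommMonoid S] [AddCommMonoid Γ] where
  tmul : S → Γ → S → S
  add_left : ∀ (a b : S) (α : Γ) (c : S), tmul (a + b) α c = tmul a α c + tmul b α c
  add_right : ∀ (a : S) (α : Γ) (b c : S), tmul a α (b + c) = tmul a α b + tmul a α c
  add_mid : ∀ (a : S) (α β : Γ) (b : S), tmul a (α + β) b = tmul a α b + tmul a β b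
  tmul_assoc : ∀ (a : S) (α : Γ) (b : S) (β : Γ) (c : S),
    tmul a α (tmul b β c) = tmul (tmul a α b) β c
  zero_left : ∀ (α : Γ) (x : S), tmul 0 α x = 0
  zero_right : ∀ (x : S) (α : Γ), tmul x α 0 = 0
  zero_mid : ∀ (x y : S), tmul x 0 y = 0

namespace GammaSemiring

variable {S Γ : Type*} [AddCommMonoid S] [AddCommMonoid Γ]

/-- The left translation map `ℓ(x,α) : a ↦ xαa`. -/
def ell (G : GammaSemiring S Γ) (x : S) (α : Γ) : S → S := fun a => G.tmul x α a

/-- Membership in the left operator semiring: the additive closure of the maps `ℓ(x,α)`. -/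
inductive InL (G : GammaSemiring S Γ) : (S → S) → Prop
  | basic (x : S) (α : Γ) : InL G (G.ell x α)
  | add {f g : S → S} : InL G f → InL G g → InL G (f + g)

lemma inL_zero (G : GammaSemiring S Γ) : G.InL (0 : S → S) := by
  have h : G.ell (0 : S) (0 : Γ) = (0 : S → S) := funext fun a => G.zero_left 0 a
  exact h ▸ InL.basic 0 0

lemma InL.comp {G : GammaSemiring S Γ} {f g : S → S} (hf : G.InL f) (hg : G.InL g) :
    G.InL (f ∘ g) := by
  induction hf with
  | basic x α =>
    induction hg with
    | basic y β =>
      have h : G.ell x α ∘ G.ell y β = G.ell (G.tmul x α y) β :=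
        funext fun a => G.tmul_assoc x α y β a
      exact h ▸ InL.basic _ _
    | add hg₁ hg₂ ih₁ ih₂ =>
      rename_i g₁ g₂
      have h : G.ell x α ∘ (g₁ + g₂) = (G.ell x α ∘ g₁) + (G.ell x α ∘ g₂) :=
        funext fun a => G.add_right x α (g₁ a) (g₂ a)
      exact h ▸ InL.add ih₁ ih₂
  | add hf₁ hf₂ ih₁ ih₂ =>
    rename_i f₁ f₂
    have h : (f₁ + f₂) ∘ g = (f₁ ∘ g) + (f₂ ∘ g) := rfl
    exact h ▸ InL.add ih₁ ih₂

/-- The left operator semiring `L` of a `Γ`-semiring, as a type: the subtype of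
maps `S → S` belonging to the additive closure of the `ℓ(x,α)`. -/
def LOp (G : GammaSemiring S Γ) : Type _ := {f : S → S // G.InL f}

/-- The zero element of `L` is the zero map. -/
instance (G : GammaSemiring S Γ) : Zero G.LOp := ⟨⟨0, G.inL_zero⟩⟩

/-- Addition in `L` is pointwise addition of maps. -/
instance (G : GammaSemiring S Γ) : Add G.LOp := ⟨fun f g => ⟨f.1 + g.1, f.2.add g.2⟩⟩

/-- Multiplication in `L` is composition of maps. -/
instance (G : GammaSemiring S Γ) : Mul G.LOp := ⟨fun f g => ⟨f.1 ∘ g.1, f.2.comp g.2⟩⟩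

/-- `S` has a left unity `∑ᵢ [eᵢ, δᵢ]`, i.e. `∑ᵢ eᵢ δᵢ a = a` for all `a ∈ S`. -/
def HasLeftUnity (G : GammaSemiring S Γ) : Prop :=
  ∃ (n : ℕ) (e : Fin n → S) (δ : Fin n → Γ), ∀ a : S, ∑ i, G.tmul (e i) (δ i) a = a

/-- `S` has a right unity `∑ⱼ [γⱼ, fⱼ]`, i.e. `∑ⱼ a γⱼ fⱼ = a` for all `a ∈ S`. -/
def HasRightUnity (G : GammaSemiring S Γ) : Prop :=
  ∃ (n : ℕ) (γ : Fin n → Γ) (f : Fin n → S), ∀ a : S, ∑ j, G.tmul a (γ j) (f j) = a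

/-- A fuzzy ideal of the `Γ`-semiring `S`: a `[0,1]`-valued function with
`σ(0) = 1`, `σ(x+y) ≥ min(σ(x),σ(y))` and `σ(xγy) ≥ max(σ(x),σ(y))`. -/
def IsFuzzyIdeal (G : GammaSemiring S Γ) (sigma : S → unitInterval) : Prop :=
  sigma 0 = 1 ∧ (∀ x y : S, min (sigma x) (sigma y) ≤ sigma (x + y)) ∧
    ∀ (x : S) (γ : Γ) (y : S), max (sigma x) (sigma y) ≤ sigma (G.tmul x γ y)

/-- A fuzzy ideal of the left operator semiring `L`. -/
def IsFuzzyIdealL (G : GammaSemiring S Γ) (mu : G.LOp → unitInterval) : Prop :=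
  mu 0 = 1 ∧ (∀ f g : G.LOp, min (mu f) (mu g) ≤ mu (f + g)) ∧
    ∀ f g : G.LOp, max (mu f) (mu g) ≤ mu (f * g)

/-- A fuzzy subset is non-constant if it takes at least two distinct values. -/
def NonConstant {X : Type*} (mu : X → unitInterval) : Prop := ∃ a b : X, mu a ≠ mu b

/-- `μ⁺(x) = inf_{γ ∈ Γ} μ(ℓ(x,γ))` for a fuzzy subset `μ` of `L`. -/
noncomputable def plus (G : GammaSemiring S Γ) (mu : G.LOp → unitInterval) :
    S → unitInterval :=
  fun x => ⨅ γ : Γ, mu ⟨G.ell x γ, InL.basic x γ⟩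

/-- `σ⁺'(f) = inf_{s ∈ S} σ(f(s))` for a fuzzy subset `σ` of `S`. -/
noncomputable def plusPrime (G : GammaSemiring S Γ) (sigma : S → unitInterval) :
    G.LOp → unitInterval :=
  fun f => ⨅ s : S, sigma (f.1 s)

/-- The sum `μ₁ ⊕ μ₂` of two fuzzy subsets:
`(μ₁ ⊕ μ₂)(x) = sup { min(μ₁(u), μ₂(v)) : u + v = x }`. -/
noncomputable def fuzzySum {X : Type*} [Add X] (mu₁ mu₂ : X → unitInterval) :
    X → unitInterval :=
  fun x => sSup {r : unitInterval | ∃ u v : X, u + v = x ∧ r = min (mu₁ u) (mu₂ v)}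

end GammaSemiring
namespace GammaSemiring

variable {S Γ : Type*} [AddCommMonoid S] [AddCommMonoid Γ]

/-- An ideal of the `Γ`-semiring `S`: a nonempty subset closed under addition and under
multiplication by elements of `S` on either side. -/
def IsIdeal (G : GammaSemiring S Γ) (A : Set S) : Prop :=
  A.Nonempty ∧ (∀ a ∈ A, ∀ b ∈ A, a + b ∈ A) ∧
    ∀ a ∈ A, ∀ (x : S) (γ : Γ), G.tmul x γ a ∈ A ∧ G.tmul a γ x ∈ A

/-- An ideal of the left operator semiring `L`. -/
def IsIdealL (G : GammaSemiring S Γ) (J : Set G.LOp) : Prop :=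
  J.Nonempty ∧ (∀ f ∈ J, ∀ g ∈ J, f + g ∈ J) ∧
    ∀ f ∈ J, ∀ g : G.LOp, f * g ∈ J ∧ g * f ∈ J

/-- `I⁺' = { f ∈ L : f(s) ∈ I for all s ∈ S }` for a subset `I` of `S`. -/
def idealPlusPrime (G : GammaSemiring S Γ) (A : Set S) : Set G.LOp :=
  {f : G.LOp | ∀ s : S, f.1 s ∈ A}

/-- `J⁺ = { a ∈ S : ℓ(a,γ) ∈ J for all γ ∈ Γ }` for a subset `J` of `L`. -/
def idealPlus (G : GammaSemiring S Γ) (J : Set G.LOp) : Set S :=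
  {a : S | ∀ γ : Γ, (⟨G.ell a γ, InL.basic a γ⟩ : G.LOp) ∈ J}

/-- `S` is zero-divisor free: `aαb = 0` implies `a = 0` or `α = 0` or `b = 0`. -/
def ZDF (G : GammaSemiring S Γ) : Prop :=
  ∀ (a : S) (α : Γ) (b : S), G.tmul a α b = 0 → a = 0 ∨ α = 0 ∨ b = 0

/-- `S` is a commutative `Γ`-semiring: `aαb = bαa`. -/
def IsCommutative (G : GammaSemiring S Γ) : Prop :=
  ∀ (a : S) (α : Γ) (b : S), G.tmul a α b = G.tmul b α a

/-- A commutative `Γ`-semiring `S` is a `Γ`-semifield if for all `a ≠ 0` and `α ≠ 0` there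
are `b ∈ S`, `β ∈ Γ` with `aαbβd = d` for all `d ∈ S`. -/
def IsGammaSemifield (G : GammaSemiring S Γ) : Prop :=
  G.IsCommutative ∧ ∀ a : S, a ≠ 0 → ∀ α : Γ, α ≠ 0 →
    ∃ (b : S) (β : Γ), ∀ d : S, G.tmul (G.tmul a α b) β d = d

/-- The `Γₙ`-semiring product on `n × n` matrices:
`(A Δ B) i j = ∑ t ∑ k, (A i t) (Δ t k) (B k j)`. -/
def matTmul (G : GammaSemiring S Γ) {n : ℕ} (A : Matrix (Fin n) (Fin n) S)
    (D : Matrix (Fin n) (Fin n) Γ) (B : Matrix (Fin n) (Fin n) S) :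
    Matrix (Fin n) (Fin n) S :=
  Matrix.of fun i j => ∑ t, ∑ k, G.tmul (A i t) (D t k) (B k j)

/-- A fuzzy ideal of the matrix `Γₙ`-semiring `Sₙ`, defined in the same way as for `S`,
with `Sₙ`, `Γₙ` in place of `S`, `Γ`. -/
def IsFuzzyIdealMatrix (G : GammaSemiring S Γ) {n : ℕ}
    (mu : Matrix (Fin n) (Fin n) S → unitInterval) : Prop :=
  mu 0 = 1 ∧ (∀ A B : Matrix (Fin n) (Fin n) S, min (mu A) (mu B) ≤ mu (A + B)) ∧
    ∀ (A : Matrix (Fin n) (Fin n) S) (D : Matrix (Fin n) (Fin n) Γ)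
      (B : Matrix (Fin n) (Fin n) S), max (mu A) (mu B) ≤ mu (G.matTmul A D B)

end GammaSemiring

open Classical in
/-- The characteristic function of a subset, as a fuzzy subset. -/
noncomputable def fuzzyIndicator {X : Type*} (A : Set X) : X → unitInterval :=
  fun x => if x ∈ A then 1 else 0

/-- `μₙ`, the fuzzy subset of `Sₙ` induced by a fuzzy subset `μ` of `S`:
`μₙ(A) = min { μ(Aᵢⱼ) : 1 ≤ i,j ≤ n }`. -/
noncomputable def matFuzzy {S : Type*} {n : ℕ} (mu : S → unitInterval) :
    Matrix (Fin n) (Fin n) S → unitInterval :=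
  fun A => ⨅ i, ⨅ j, mu (A i j)


variable {S Γ : Type*} [AddCommMonoid S] [AddCommMonoid Γ]

/-- Each operator in `L` moves elements to a larger (or equal) membership degree. -/
lemma GammaSemiring.IsFuzzyIdeal.le_apply {G : GammaSemiring S Γ} {sigma : S → unitInterval}
    (hsigma : G.IsFuzzyIdeal sigma) {f : S → S} (hf : G.InL f) (s : S) :
    sigma s ≤ sigma (f s) := by
  induction hf with
  | basic x α => exact (le_max_right _ _).trans (hsigma.2.2 x α s)
  | add _ _ ih₁ ih₂ => exact (le_min ih₁ ih₂).trans (hsigma.2.1 _ _)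

lemma GammaSemiring.IsFuzzyIdeal.sum_eq_one {G : GammaSemiring S Γ} {sigma : S → unitInterval}
    (hsigma : G.IsFuzzyIdeal sigma) {ι : Type*} (t : Finset ι) (u : ι → S)
    (h : ∀ i, sigma (u i) = 1) : sigma (∑ i ∈ t, u i) = 1 :=
  Finset.sum_induction u (fun x => sigma x = 1)
    (fun x y hx hy => le_antisymm unitInterval.le_one' (by
      have := hsigma.2.1 x y
      rwa [hx, hy, min_self] at this))
    hsigma.1 (fun i _ => h i)

/-- If `σ` is a fuzzy ideal of the `Γ`-semiring `S` (with left and right unity),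
then `σ⁺'` is a fuzzy ideal of the left operator semiring `L`; moreover if `σ` is
non-constant then so is `σ⁺'`. -/
theorem plusPrime_isFuzzyIdealL (G : GammaSemiring S Γ)
    (hLU : G.HasLeftUnity) (hRU : G.HasRightUnity)
    (sigma : S → unitInterval) (hsigma : G.IsFuzzyIdeal sigma) :
    G.IsFuzzyIdealL (G.plusPrime sigma) ∧
      (GammaSemiring.NonConstant sigma → GammaSemiring.NonConstant (G.plusPrime sigma)) := by
  have hle (f : G.LOp) (s : S) : G.plusPrime sigma f ≤ sigma (f.1 s) := iInf_le _ s
  have h0 : G.plusPrime sigma 0 = 1 :=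
    le_antisymm unitInterval.le_one' (le_iInf fun s => hsigma.1.ge)
  refine ⟨⟨h0, fun f g => le_iInf fun s => ?_, fun f g => le_iInf fun s => ?_⟩, ?_⟩
  · exact (min_le_min (hle f s) (hle g s)).trans (hsigma.2.1 _ _)
  · exact max_le (hle f (g.1 s)) ((hle g s).trans (hsigma.le_apply f.2 (g.1 s)))
  · rintro ⟨a, b, hab⟩
    by_contra hconst
    have hone (f : G.LOp) : G.plusPrime sigma f = 1 := by
      by_contra hf
      exact hconst ⟨f, 0, by rwa [h0]⟩
    obtain ⟨n, e, δ, he⟩ := hLU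
    have hall (c : S) : sigma c = 1 := by
      rw [← he c]
      refine hsigma.sum_eq_one _ _ fun i => le_antisymm unitInterval.le_one' ?_
      let f : G.LOp := ⟨G.ell (e i) (δ i), .basic _ _⟩
      exact (hone f).ge.trans (hle f c)
    exact hab ((hall a).trans (hall b).symm)
end

section
/- Let S be a Γ-semiring with a left unity and a right unity, and let L be its left operator semiring. For every fuzzy ideal σ of S one has (σ⁺')⁺ = σ. -/
variable {S Γ : Type*} [AddCommMonoid S] [AddCommMonoid Γ]

/-- For every fuzzy ideal `σ` of `S` one has `(σ⁺')⁺ = σ`. -/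
theorem plus_plusPrime_eq (G : GammaSemiring S Γ)
    (hLU : G.HasLeftUnity) (hRU : G.HasRightUnity)
    (sigma : S → unitInterval) (hsigma : G.IsFuzzyIdeal sigma) :
    G.plus (G.plusPrime sigma) = sigma := by
  obtain ⟨h0, hadd, hmul⟩ := hsigma
  obtain ⟨n, γ, f, hf⟩ := hRU
  funext x
  apply le_antisymm
  · have key : ∀ t : Finset (Fin n),
        G.plus (G.plusPrime sigma) x ≤ sigma (∑ j ∈ t, G.tmul x (γ j) (f j)) := by
      intro t
      refine Finset.sum_induction _ (fun y => G.plus (G.plusPrime sigma) x ≤ sigma y)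
        (fun a b ha hb => (le_min ha hb).trans (hadd a b)) ?_ fun j _ => ?_
      -- The empty sum: the right unity may have no terms.
      · rw [h0]
        exact le_top
      · exact (iInf_le _ (γ j)).trans (iInf_le _ (f j))
    simpa only [hf] using key Finset.univ
  · exact le_iInf fun α => le_iInf fun s => (le_max_left _ _).trans (hmul x α s)
end

section
/- Let S be a Γ-semiring with a left unity and a right unity, and let L be its left operator semiring. If σ₁ and σ₂ are fuzzy ideals of S with σ₁ ≠ σ₂, then σ₁⁺' ≠ σ₂⁺'. -/
variable {S Γ : Type*} [AddCommMonoid S] [AddCommMonoid Γ]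

lemma GammaSemiring.IsFuzzyIdeal.le_sum {G : GammaSemiring S Γ} {sigma : S → unitInterval}
    (h : G.IsFuzzyIdeal sigma) {ι : Type*} (t : Finset ι) (u : ι → S) (c : unitInterval)
    (hc : ∀ i ∈ t, c ≤ sigma (u i)) : c ≤ sigma (∑ i ∈ t, u i) :=
  Finset.sum_induction u (fun y => c ≤ sigma y)
    (fun a b ha hb => (le_min ha hb).trans (h.2.1 a b)) (h.1 ▸ unitInterval.le_one') hc

lemma GammaSemiring.IsFuzzyIdeal.le_plusPrime_ell {G : GammaSemiring S Γ}
    {sigma : S → unitInterval} (h : G.IsFuzzyIdeal sigma) (x : S) (γ : Γ) :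
    sigma x ≤ G.plusPrime sigma ⟨G.ell x γ, InL.basic x γ⟩ :=
  le_iInf fun s => (le_max_left _ _).trans (h.2.2 x γ s)

lemma GammaSemiring.le_of_plusPrime_eq {G : GammaSemiring S Γ} (hRU : G.HasRightUnity)
    {sigma₁ sigma₂ : S → unitInterval} (h₁ : G.IsFuzzyIdeal sigma₁) (h₂ : G.IsFuzzyIdeal sigma₂)
    (heq : G.plusPrime sigma₁ = G.plusPrime sigma₂) (x : S) : sigma₁ x ≤ sigma₂ x := by
  obtain ⟨n, γ, f, hf⟩ := hRU
  have key : sigma₁ x ≤ sigma₂ (∑ j, G.tmul x (γ j) (f j)) := by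
    refine h₂.le_sum _ _ _ fun j _ => ?_
    have h := h₁.le_plusPrime_ell x (γ j)
    rw [heq] at h
    exact h.trans (iInf_le (fun s => sigma₂ (G.tmul x (γ j) s)) (f j))
  rwa [hf x] at key

/-- If `σ₁ ≠ σ₂` are fuzzy ideals of `S` then `σ₁⁺' ≠ σ₂⁺'`. -/
theorem plusPrime_injective (G : GammaSemiring S Γ)
    (hLU : G.HasLeftUnity) (hRU : G.HasRightUnity)
    (sigma₁ sigma₂ : S → unitInterval)
    (h₁ : G.IsFuzzyIdeal sigma₁) (h₂ : G.IsFuzzyIdeal sigma₂)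
    (hne : sigma₁ ≠ sigma₂) :
    G.plusPrime sigma₁ ≠ G.plusPrime sigma₂ := by
  intro heq
  exact hne (funext fun x => le_antisymm
    (GammaSemiring.le_of_plusPrime_eq hRU h₁ h₂ heq x)
    (GammaSemiring.le_of_plusPrime_eq hRU h₂ h₁ heq.symm x))
end

section
/- Let S be a Γ-semiring with a left unity and a right unity, and let L be its left operator semiring. For all fuzzy ideals σ₁, σ₂ of S one has (σ₁ ⊕ σ₂)⁺' = σ₁⁺' ⊕ σ₂⁺'. -/
variable {S Γ : Type*} [AddCommMonoid S] [AddCommMonoid Γ]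

namespace GammaSemiring

lemma InL.map_zero {G : GammaSemiring S Γ} {f : S → S} (hf : G.InL f) : f 0 = 0 := by
  induction hf with
  | basic x α => exact G.zero_right x α
  | add _ _ ih₁ ih₂ => simp [ih₁, ih₂]

lemma InL.map_add {G : GammaSemiring S Γ} {f : S → S} (hf : G.InL f) (a b : S) :
    f (a + b) = f a + f b := by
  induction hf with
  | basic x α => exact G.add_right x α a b
  | add _ _ ih₁ ih₂ => simp only [Pi.add_apply, ih₁, ih₂, add_add_add_comm]

lemma InL.map_tmul {G : GammaSemiring S Γ} {f : S → S} (hf : G.InL f) (x : S) (α : Γ) (a : S) :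
    f (G.tmul x α a) = G.tmul (f x) α a := by
  induction hf with
  | basic y β => exact G.tmul_assoc y β x α a
  | add _ _ ih₁ ih₂ => simp only [Pi.add_apply, ih₁, ih₂, G.add_left]

lemma InL.map_sum {G : GammaSemiring S Γ} {f : S → S} (hf : G.InL f) {n : ℕ} (x : Fin n → S) :
    f (∑ i, x i) = ∑ i, f (x i) :=
  _root_.map_sum (⟨⟨f, hf.map_zero⟩, hf.map_add⟩ : S →+ S) x Finset.univ

lemma inL_sum_ell (G : GammaSemiring S Γ) {n : ℕ} (u : Fin n → S) (δ : Fin n → Γ) :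
    G.InL (fun a => ∑ i, G.tmul (u i) (δ i) a) := by
  have h : G.InL (∑ i, G.ell (u i) (δ i)) :=
    Finset.sum_induction _ _ (fun _ _ => InL.add) G.inL_zero fun i _ => InL.basic _ _
  convert h using 1
  funext a
  simp [ell]

/-- A lower bound for `σ` at the `uᵢ` bounds every value of `∑ᵢ ℓ(uᵢ, δᵢ)`, hence bounds `σ⁺'` at
that operator; the empty sum is covered by `σ 0 = 1`. -/
lemma IsFuzzyIdeal.le_sum_tmul {G : GammaSemiring S Γ} {sigma : S → unitInterval}
    (h : G.IsFuzzyIdeal sigma) {t : unitInterval} {n : ℕ} {u : Fin n → S}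
    (hu : ∀ i, t ≤ sigma (u i)) (δ : Fin n → Γ) (a : S) :
    t ≤ sigma (∑ i, G.tmul (u i) (δ i) a) := by
  refine Finset.sum_induction _ (fun x => t ≤ sigma x)
    (fun x y hx hy => (le_min hx hy).trans (h.2.1 x y)) ?_ fun i _ => ?_
  · rw [h.1]
    exact unitInterval.le_one'
  · exact (hu i).trans ((le_max_left _ _).trans (h.2.2 _ _ _))

end GammaSemiring

/-- For fuzzy ideals `σ₁, σ₂` of `S`, `(σ₁ ⊕ σ₂)⁺' = σ₁⁺' ⊕ σ₂⁺'`. -/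
theorem plusPrime_fuzzySum (G : GammaSemiring S Γ)
    (hLU : G.HasLeftUnity) (hRU : G.HasRightUnity)
    (sigma₁ sigma₂ : S → unitInterval)
    (h₁ : G.IsFuzzyIdeal sigma₁) (h₂ : G.IsFuzzyIdeal sigma₂) :
    G.plusPrime (GammaSemiring.fuzzySum sigma₁ sigma₂)
      = GammaSemiring.fuzzySum (G.plusPrime sigma₁) (G.plusPrime sigma₂) := by
  funext f
  apply le_antisymm
  · obtain ⟨n, e, δ, he⟩ := hLU
    refine le_of_forall_lt_imp_le_of_dense fun t ht => ?_
    have hval (i : Fin n) : ∃ u v : S, u + v = f.1 (e i) ∧ t < sigma₁ u ∧ t < sigma₂ v := by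
      have hi : t < GammaSemiring.fuzzySum sigma₁ sigma₂ (f.1 (e i)) :=
        ht.trans_le (iInf_le _ (e i))
      obtain ⟨r, ⟨u, v, huv, rfl⟩, hr⟩ := lt_sSup_iff.1 hi
      exact ⟨u, v, huv, lt_min_iff.1 hr⟩
    choose u v huv hu hv using hval
    refine le_sSup_of_le ⟨⟨_, G.inL_sum_ell u δ⟩, ⟨_, G.inL_sum_ell v δ⟩, ?_, rfl⟩
      (le_min (le_iInf fun a => h₁.le_sum_tmul (fun i => (hu i).le) δ a)
        (le_iInf fun a => h₂.le_sum_tmul (fun i => (hv i).le) δ a))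
    refine Subtype.ext (funext fun a => ?_)
    change ∑ i, G.tmul (u i) (δ i) a + ∑ i, G.tmul (v i) (δ i) a = f.1 a
    -- Expanding `a` by the left unity turns `f a` into `∑ᵢ (f eᵢ) δᵢ a`.
    conv_rhs => rw [← he a, f.2.map_sum]
    simp only [f.2.map_tmul, ← huv, G.add_left, Finset.sum_add_distrib]
  · refine sSup_le ?_
    rintro r ⟨g, h, rfl, rfl⟩
    refine le_iInf fun s => le_sSup_of_le ⟨g.1 s, h.1 s, rfl, rfl⟩ ?_
    exact min_le_min (iInf_le _ s) (iInf_le _ s)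
end

section
/- Let S be a Γ-semiring with a left unity and a right unity, and let L be its left operator semiring. If μ is a fuzzy ideal of L, then μ⁺ is a fuzzy ideal of S; moreover, if μ is non-constant then μ⁺ is non-constant. -/
variable {S Γ : Type*} [AddCommMonoid S] [AddCommMonoid Γ]

/-- The left translation `ℓ(x,γ)` as an element of the left operator semiring `L`. -/
def GammaSemiring.ellOp (G : GammaSemiring S Γ) (x : S) (γ : Γ) : G.LOp :=
  ⟨G.ell x γ, GammaSemiring.InL.basic x γ⟩

/-- If `μ` is a fuzzy ideal of the left operator semiring `L`, then `μ⁺`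
is a fuzzy ideal of `S`; moreover if `μ` is non-constant then so is `μ⁺`. -/
theorem plus_isFuzzyIdeal (G : GammaSemiring S Γ)
    (hLU : G.HasLeftUnity) (hRU : G.HasRightUnity)
    (mu : G.LOp → unitInterval) (hmu : G.IsFuzzyIdealL mu) :
    G.IsFuzzyIdeal (G.plus mu) ∧
      (GammaSemiring.NonConstant mu → GammaSemiring.NonConstant (G.plus mu)) := by
  obtain ⟨h0, hadd, hmul⟩ := hmu
  have hle : ∀ (x : S) (γ : Γ),
      G.plus mu x ≤ mu (G.ellOp x γ) := fun x γ =>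
    iInf_le (fun γ : Γ => mu (G.ellOp x γ)) γ
  have hzero : G.plus mu 0 = 1 := by
    refine le_antisymm unitInterval.le_one' (le_iInf fun γ => ?_)
    have e : G.ellOp 0 γ = 0 :=
      Subtype.ext (funext fun a => G.zero_left γ a)
    change 1 ≤ mu (G.ellOp 0 γ)
    rw [e, h0]
  refine ⟨⟨hzero, fun x y => le_iInf fun γ => ?_, fun x γ y => le_iInf fun δ => ?_⟩, ?_⟩
  · have e : G.ellOp (x + y) γ =
        G.ellOp x γ +
          G.ellOp y γ :=
      Subtype.ext (funext fun a => G.add_left x y γ a)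
    change _ ≤ mu (G.ellOp (x + y) γ)
    rw [e]
    exact (min_le_min (hle x γ) (hle y γ)).trans (hadd _ _)
  · have e : G.ellOp (G.tmul x γ y) δ =
        G.ellOp x γ *
          G.ellOp y δ :=
      Subtype.ext (funext fun a => (G.tmul_assoc x γ y δ a).symm)
    change _ ≤ mu (G.ellOp (G.tmul x γ y) δ)
    rw [e]
    exact (max_le_max (hle x γ) (hle y δ)).trans (hmul _ _)
  · rintro ⟨a, b, hab⟩
    by_contra hc
    have hone : ∀ x : S, G.plus mu x = 1 := fun x => by
      by_contra hx
      exact hc ⟨x, 0, by rwa [hzero]⟩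
    have hall : ∀ (f : S → S) (hf : G.InL f), mu ⟨f, hf⟩ = 1 := by
      intro f hf
      induction hf with
      | basic x γ => exact le_antisymm unitInterval.le_one' ((hone x).symm.le.trans (hle x γ))
      | add hf hg ihf ihg =>
        refine le_antisymm unitInterval.le_one' ?_
        have h := hadd ⟨_, hf⟩ ⟨_, hg⟩
        rw [ihf, ihg, min_self] at h
        exact h
    exact hab ((hall a.1 a.2).trans (hall b.1 b.2).symm)
end

section
/- Let S be a Γ-semiring with a left unity and a right unity, and let L be its left operator semiring. If I is an ideal of S and λ_I is its characteristic function, then (λ_I)⁺' = λ_{I⁺'}; moreover, I⁺' is an ideal of the semiring L. -/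
namespace GammaSemiring

variable {S Γ : Type*} [AddCommMonoid S] [AddCommMonoid Γ]

lemma IsIdeal.zero_mem {G : GammaSemiring S Γ} {A : Set S} (hA : G.IsIdeal A) : (0 : S) ∈ A := by
  obtain ⟨⟨a, ha⟩, -, hmul⟩ := hA
  simpa only [G.zero_left] using (hmul a ha 0 0).1

lemma IsIdeal.apply_mem {G : GammaSemiring S Γ} {A : Set S} (hA : G.IsIdeal A) {g : S → S}
    (hg : G.InL g) {a : S} (ha : a ∈ A) : g a ∈ A := by
  induction hg with
  | basic x α => exact (hA.2.2 a ha x α).1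
  | add _ _ ih₁ ih₂ => exact hA.2.1 _ ih₁ _ ih₂

lemma IsIdeal.idealPlusPrime {G : GammaSemiring S Γ} {A : Set S} (hA : G.IsIdeal A) :
    G.IsIdealL (G.idealPlusPrime A) :=
  ⟨⟨0, fun _ => hA.zero_mem⟩, fun _ hf _ hg s => hA.2.1 _ (hf s) _ (hg s),
    fun _ hf g => ⟨fun s => hf (g.1 s), fun s => hA.apply_mem g.2 (hf s)⟩⟩

lemma plusPrime_fuzzyIndicator (G : GammaSemiring S Γ) (A : Set S) :
    G.plusPrime (fuzzyIndicator A) = fuzzyIndicator (G.idealPlusPrime A) := by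
  funext f
  by_cases hf : f ∈ G.idealPlusPrime A
  · have h : ∀ s, fuzzyIndicator A (f.1 s) = 1 := fun s => if_pos (hf s)
    have h1 : G.plusPrime (fuzzyIndicator A) f = 1 := by simp only [plusPrime, h, ciInf_const]
    rw [h1, fuzzyIndicator, if_pos hf]
  · obtain ⟨s, hs⟩ : ∃ s, f.1 s ∉ A := not_forall.mp hf
    have h : fuzzyIndicator A (f.1 s) = 0 := if_neg hs
    have h0 : G.plusPrime (fuzzyIndicator A) f ≤ 0 :=
      h ▸ iInf_le (fun t => fuzzyIndicator A (f.1 t)) s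
    rw [le_antisymm h0 unitInterval.nonneg', fuzzyIndicator, if_neg hf]

end GammaSemiring

variable {S Γ : Type*} [AddCommMonoid S] [AddCommMonoid Γ]

/-- For an ideal `I` of `S` with characteristic function `λ_I`, one has
`(λ_I)⁺' = λ_{I⁺'}`; moreover `I⁺'` is an ideal of the semiring `L`. -/
theorem indicator_plusPrime (G : GammaSemiring S Γ)
    (hLU : G.HasLeftUnity) (hRU : G.HasRightUnity)
    (A : Set S) (hA : G.IsIdeal A) :
    G.plusPrime (fuzzyIndicator A) = fuzzyIndicator (G.idealPlusPrime A) ∧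
      G.IsIdealL (G.idealPlusPrime A) := by
  exact ⟨G.plusPrime_fuzzyIndicator A, hA.idealPlusPrime⟩
end

section
/- Let S be a Γ-semiring with a left unity and a right unity, and let L be its left operator semiring. If J is an ideal of L and λ_J is its characteristic function, then (λ_J)⁺ = λ_{J⁺}; moreover, J⁺ is an ideal of the Γ-semiring S. -/
variable {S Γ : Type*} [AddCommMonoid S] [AddCommMonoid Γ]

/-- The map `ℓ(x,γ)` as an element of the operator semiring `L`. -/
abbrev GammaSemiring.ellL (G : GammaSemiring S Γ) (x : S) (γ : Γ) : G.LOp :=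
  ⟨G.ell x γ, GammaSemiring.InL.basic x γ⟩

/-- For an ideal `J` of `L` with characteristic function `λ_J`, one has
`(λ_J)⁺ = λ_{J⁺}`; moreover `J⁺` is an ideal of the `Γ`-semiring `S`. -/
theorem indicator_plus (G : GammaSemiring S Γ)
    (hLU : G.HasLeftUnity) (hRU : G.HasRightUnity)
    (J : Set G.LOp) (hJ : G.IsIdealL J) :
    G.plus (fuzzyIndicator J) = fuzzyIndicator (G.idealPlus J) ∧
      G.IsIdeal (G.idealPlus J) := by
  refine ⟨?_, ?_, ?_, ?_⟩
  · funext x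
    by_cases hx : x ∈ G.idealPlus J
    · have h : ∀ γ : Γ, fuzzyIndicator J (G.ellL x γ) = 1 :=
        fun γ => if_pos (hx γ)
      have hp : G.plus (fuzzyIndicator J) x = 1 := (iInf_congr h).trans ciInf_const
      rw [hp, fuzzyIndicator, if_pos hx]
    · obtain ⟨γ, hγ⟩ := not_forall.mp hx
      have h : fuzzyIndicator J (G.ellL x γ) = 0 := if_neg hγ
      have hle : G.plus (fuzzyIndicator J) x ≤ 0 := h ▸ iInf_le _ γ
      rw [le_antisymm hle unitInterval.nonneg', fuzzyIndicator, if_neg hx]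
  · obtain ⟨f, hf⟩ := hJ.1
    refine ⟨0, fun γ => ?_⟩
    -- `ℓ(0,γ)` is the zero map, and `J` contains it as `0 ∘ f` for any `f ∈ J`.
    have h : G.ellL 0 γ = 0 * f :=
      Subtype.ext (funext fun a => G.zero_left γ a)
    exact Set.mem_of_eq_of_mem h (hJ.2.2 f hf 0).2
  · intro a ha b hb γ
    have h : G.ellL (a + b) γ = G.ellL a γ + G.ellL b γ :=
      Subtype.ext (funext fun c => G.add_left a b γ c)
    exact Set.mem_of_eq_of_mem h (hJ.2.1 _ (ha γ) _ (hb γ))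
  · have h : ∀ (x : S) (α : Γ) (y : S) (γ : Γ),
        G.ellL (G.tmul x α y) γ = G.ellL x α * G.ellL y γ :=
      fun x α y γ => Subtype.ext (funext fun c => (G.tmul_assoc x α y γ c).symm)
    exact fun a ha x α => ⟨fun γ => Set.mem_of_eq_of_mem (h x α a γ) (hJ.2.2 _ (ha γ) _).2,
      fun γ => Set.mem_of_eq_of_mem (h a α x γ) (hJ.2.2 _ (ha α) _).1⟩
end

section
/- Let M be a nontrivial commutative semiring (with 0 and 1, 0 ≠ 1). Then M is a semifield, i.e. every nonzero element of M has a multiplicative inverse, if and only if for every non-constant fuzzy ideal μ of M one has μ(x) = μ(y) < μ(0) for all x, y ∈ M \ {0}. -/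
/-- Crisp ideals give fuzzy ideals; only principal ideals are needed here. -/
lemma fuzzyIndicator_dvd_isFuzzyIdeal {M : Type*} [CommSemiring M] (a : M) :
    (∃ x : M, fuzzyIndicator {b | a ∣ b} x ≠ 0) ∧
      (∀ x y : M, min (fuzzyIndicator {b | a ∣ b} x) (fuzzyIndicator {b | a ∣ b} y) ≤
        fuzzyIndicator {b | a ∣ b} (x + y)) ∧
      (∀ x y : M, max (fuzzyIndicator {b | a ∣ b} x) (fuzzyIndicator {b | a ∣ b} y) ≤
        fuzzyIndicator {b | a ∣ b} (x * y)) := by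
  simp only [fuzzyIndicator, Set.mem_ofPred_eq]
  refine ⟨⟨0, by simp⟩, fun x y => ?_, fun x y => ?_⟩
  · by_cases hx : a ∣ x
    · by_cases hy : a ∣ y
      · simp [hx, hy, dvd_add hx hy]
      · simp [hy]
    · simp [hx]
  · by_cases hx : a ∣ x
    · simp [hx.mul_right y, unitInterval.le_one']
    · by_cases hy : a ∣ y
      · simp [hy.mul_left x, unitInterval.le_one']
      · simp [hx, hy]

/-- A nontrivial commutative semiring `M` is a semifield (every nonzero
element is invertible) iff every non-constant fuzzy ideal `μ` of `M` satisfies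
`μ(x) = μ(y) < μ(0)` for all nonzero `x, y`. -/
theorem semifield_iff_fuzzy {M : Type*} [CommSemiring M] [Nontrivial M] :
    (∀ x : M, x ≠ 0 → ∃ y : M, x * y = 1) ↔
      (∀ mu : M → unitInterval,
        ((∃ x : M, mu x ≠ 0) ∧ (∀ x y : M, min (mu x) (mu y) ≤ mu (x + y)) ∧
          (∀ x y : M, max (mu x) (mu y) ≤ mu (x * y))) →
        GammaSemiring.NonConstant mu →
        ∀ x y : M, x ≠ 0 → y ≠ 0 → mu x = mu y ∧ mu x < mu 0) := by
  constructor
  · rintro hinv mu ⟨-, -, hmul⟩ ⟨a, b, hab⟩ x y hx hy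
    have eq_one : ∀ z : M, z ≠ 0 → mu z = mu 1 := by
      intro z hz
      obtain ⟨w, hw⟩ := hinv z hz
      apply le_antisymm
      · simpa only [hw] using (le_max_left _ _).trans (hmul z w)
      · simpa only [mul_one] using (le_max_right _ _).trans (hmul z 1)
    have le_zero : mu 1 ≤ mu 0 := by
      simpa only [mul_zero] using (le_max_left _ _).trans (hmul 1 0)
    refine ⟨(eq_one x hx).trans (eq_one y hy).symm, ?_⟩
    rw [eq_one x hx]
    refine lt_of_le_of_ne le_zero fun h => hab ?_
    have const : ∀ z : M, mu z = mu 1 := fun z => by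
      by_cases hz : z = 0
      · rw [hz, h]
      · exact eq_one z hz
    rw [const a, const b]
  · intro h x hx
    by_contra hinv
    have hx1 : ¬ x ∣ 1 := fun ⟨y, hy⟩ => hinv ⟨y, hy.symm⟩
    have hlt := (h _ (fuzzyIndicator_dvd_isFuzzyIdeal x)
      ⟨0, 1, by simp [fuzzyIndicator, hx1]⟩ x x hx hx).2
    simp [fuzzyIndicator] at hlt
end

section
/- Let S be a zero-divisor-free (ZDF) commutative Γ-semiring with a left unity and a right unity. Then S is a Γ-semifield if and only if for every non-constant fuzzy ideal μ of S one has μ(x) = μ(y) < μ(0_S) for all x, y ∈ S \ {0_S}. -/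
variable {S Γ : Type*} [AddCommMonoid S] [AddCommMonoid Γ]

/-- The characteristic function of an ideal is a fuzzy ideal. -/
lemma GammaSemiring.IsIdeal.isFuzzyIdeal_fuzzyIndicator {G : GammaSemiring S Γ} {A : Set S}
    (hA : G.IsIdeal A) : G.IsFuzzyIdeal (fuzzyIndicator A) := by
  obtain ⟨⟨c, hc⟩, hadd, hmul⟩ := hA
  have h0 : (0 : S) ∈ A := by simpa [G.zero_left] using (hmul c hc 0 0).1
  refine ⟨by simp [fuzzyIndicator, h0], fun x y => ?_, fun x γ y => ?_⟩
  · by_cases hx : x ∈ A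
    · by_cases hy : y ∈ A
      · simp [fuzzyIndicator, hx, hy, hadd x hx y hy]
      · simp [fuzzyIndicator, hy]
    · simp [fuzzyIndicator, hx]
  · by_cases hx : x ∈ A
    · simp [fuzzyIndicator, (hmul x hx y γ).2, unitInterval.le_one']
    · by_cases hy : y ∈ A
      · simp [fuzzyIndicator, (hmul y hy x γ).1, unitInterval.le_one']
      · simp [fuzzyIndicator, hx, hy]

/-- For `a ≠ 0` and `α ≠ 0`, the ideal `aαS` is nonzero, so the fuzzy condition forces it to be
all of `S`. -/
lemma GammaSemiring.tmul_surjective {G : GammaSemiring S Γ}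
    (hComm : G.IsCommutative) (hZDF : G.ZDF)
    (h : ∀ mu : S → unitInterval, G.IsFuzzyIdeal mu → GammaSemiring.NonConstant mu →
      ∀ x y : S, x ≠ 0 → y ≠ 0 → mu x = mu y ∧ mu x < mu 0)
    {a : S} (ha : a ≠ 0) {α : Γ} (hα : α ≠ 0) : Function.Surjective (G.tmul a α) := by
  have hI : G.IsIdeal (Set.range (G.tmul a α)) := by
    refine ⟨⟨_, a, rfl⟩, ?_, ?_⟩
    · rintro _ ⟨s, rfl⟩ _ ⟨t, rfl⟩
      exact ⟨s + t, G.add_right _ _ _ _⟩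
    · rintro _ ⟨s, rfl⟩ x γ
      have hr : G.tmul a α (G.tmul s γ x) = G.tmul (G.tmul a α s) γ x := G.tmul_assoc _ _ _ _ _
      exact ⟨⟨_, hr.trans (hComm _ _ _)⟩, ⟨_, hr⟩⟩
  by_contra hsurj
  obtain ⟨d, hd⟩ : ∃ d, d ∉ Set.range (G.tmul a α) := by
    simpa [Function.Surjective] using hsurj
  have haa : G.tmul a α a ≠ 0 := fun h0 => by simpa [ha, hα] using hZDF a α a h0
  have hmem : G.tmul a α a ∈ Set.range (G.tmul a α) := ⟨a, rfl⟩
  have hF := hI.isFuzzyIdeal_fuzzyIndicator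
  have hne : GammaSemiring.NonConstant (fuzzyIndicator (Set.range (G.tmul a α))) := by
    refine ⟨G.tmul a α a, d, ?_⟩
    simp only [fuzzyIndicator, if_pos hmem, if_neg hd]
    exact one_ne_zero
  have hlt := (h _ hF hne _ _ haa haa).2
  rw [hF.1] at hlt
  simp only [fuzzyIndicator, if_pos hmem] at hlt
  exact lt_irrefl _ hlt

/-- A ZDF commutative `Γ`-semiring `S` (with left and right unity) is a
`Γ`-semifield iff every non-constant fuzzy ideal `μ` of `S` satisfies
`μ(x) = μ(y) < μ(0)` for all nonzero `x, y ∈ S`. -/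
theorem gammaSemifield_iff_fuzzy (G : GammaSemiring S Γ)
    (hComm : G.IsCommutative) (hZDF : G.ZDF)
    (hLU : G.HasLeftUnity) (hRU : G.HasRightUnity) :
    G.IsGammaSemifield ↔
      (∀ mu : S → unitInterval, G.IsFuzzyIdeal mu → GammaSemiring.NonConstant mu →
        ∀ x y : S, x ≠ 0 → y ≠ 0 → mu x = mu y ∧ mu x < mu 0) := by
  constructor
  · rintro ⟨-, hsf⟩ mu ⟨h0, -, hmul⟩ hnc
    have key : ∀ x y : S, x ≠ 0 → mu x ≤ mu y := by
      intro x y hx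
      obtain ⟨α, hα⟩ : ∃ α : Γ, α ≠ 0 := by
        by_contra! hΓ
        obtain ⟨n, e, δ, he⟩ := hLU
        exact hx (by rw [← he x]; simp [hΓ, G.zero_mid])
      obtain ⟨b, β, hb⟩ := hsf x hx α hα
      calc mu x ≤ mu (G.tmul x α b) := (le_max_left _ _).trans (hmul x α b)
        _ ≤ mu (G.tmul (G.tmul x α b) β y) := (le_max_left _ _).trans (hmul _ β y)
        _ = mu y := by rw [hb]
    intro x y hx hy
    refine ⟨le_antisymm (key x y hx) (key y x hy), lt_of_le_of_ne (key x 0 hx) fun hx0 => ?_⟩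
    have hone : ∀ z, mu z = 1 := fun z =>
      le_antisymm unitInterval.le_one' (by simpa only [hx0, h0] using key x z hx)
    obtain ⟨u, v, huv⟩ := hnc
    exact huv ((hone u).trans (hone v).symm)
  · intro h
    refine ⟨hComm, fun a ha α hα => ?_⟩
    have hsurj := GammaSemiring.tmul_surjective hComm hZDF h ha hα
    obtain ⟨e, he⟩ := hsurj a
    obtain ⟨b, hb⟩ := hsurj e
    refine ⟨b, α, fun d => ?_⟩
    obtain ⟨t, rfl⟩ := hsurj d
    rw [hb, G.tmul_assoc, hComm e, he]
end
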